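/- Let A ∈ ℝ^{n×n} be symmetric positive definite, let L ∈ ℝ^{n×n} be invertible, and set X := L L^T. Let C_1, …, C_r be a partition of {1,…,n} into nonempty sets, let S_i ∈ ℝ^{n×|C_i|} be the submatrix of L consisting of the columns indexed by C_i, and let p_i := Tr(S_i^T A S_i)/Tr(L^T A L) (so p_i > 0 and Σ_i p_i = 1). For each i, define the randomized BFGS update X⁺_i := S_i (S_i^T A S_i)^{-1} S_i^T + (I − S_i (S_i^T A S_i)^{-1} S_i^T A) X (I − A S_i (S_i^T A S_i)^{-1} S_i^T). Then Σ_{i=1}^r p_i ‖X⁺_i − A^{-1}‖_{F(A)}² ≤ (1 − λ_min(L^T A L)/Tr(L^T A L)) ‖X − A^{-1}‖_{F(A)}². -/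

import Mathlib

open Matrix BigOperators

/-!
Let `P = S (Sᴴ A S)⁻¹ Sᴴ`. Since `P A P = P`, one update turns the error `Y = X - A⁻¹` into
`(1 - P A) Y (1 - A P)`, and `(1 - A P) A (1 - P A) = A - A P A ≤ A` in the Loewner order. Hence the
squared weighted error drops by at least `tr (P A Yᴴ A Y A)`, which is linear in `P`, and an average
of updates contracts by `1 - ρ` as soon as `ρ A⁻¹ ≤ ∑ pᵢ Pᵢ`.

For `pᵢ` proportional to `tr Bᵢ`, where `Bᵢ = Sᵢᴴ A Sᵢ`, this holds because `Bᵢ ≤ (tr Bᵢ) 1` gives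
`Sᵢ Sᵢᴴ ≤ (tr Bᵢ) Pᵢ`; summing over the blocks, `∑ (tr Bᵢ) Pᵢ ≥ L Lᴴ`, and
`λ_min(Lᴴ A L) 1 ≤ Lᴴ A L` gives `L Lᴴ ≥ λ_min(Lᴴ A L) A⁻¹`.
-/

section

open scoped ComplexOrder MatrixOrder
open RCLike (re)

variable {𝕜 m n ι : Type*} [RCLike 𝕜]

section Loewner

variable [Fintype n]

lemma mul_mul_conjTranspose_mono [Finite m] {P Q : Matrix n n 𝕜} (h : P ≤ Q) (U : Matrix m n 𝕜) :
    U * P * Uᴴ ≤ U * Q * Uᴴ := by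
  rw [Matrix.le_iff, ← Matrix.sub_mul, ← Matrix.mul_sub]
  exact (Matrix.le_iff.1 h).mul_mul_conjTranspose_same U

lemma trace_mul_nonneg {P Q : Matrix n n 𝕜} (hP : P.PosSemidef) (hQ : Q.PosSemidef) :
    0 ≤ (P * Q).trace := by
  classical
  obtain ⟨R, rfl⟩ := CStarAlgebra.nonneg_iff_eq_star_mul_self.1 hP.nonneg
  rw [Matrix.mul_assoc, trace_mul_comm]
  exact (hQ.mul_mul_conjTranspose_same R).trace_nonneg

lemma re_trace_mul_mono {P Q W : Matrix n n 𝕜} (h : P ≤ Q) (hW : W.PosSemidef) :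
    re (P * W).trace ≤ re (Q * W).trace := by
  have hdiff := (RCLike.nonneg_iff.1 (trace_mul_nonneg (Matrix.le_iff.1 h) hW)).1
  rwa [Matrix.sub_mul, trace_sub, map_sub, sub_nonneg] at hdiff

lemma mul_le_mul_of_commute {P Q W : Matrix n n 𝕜} (h : P ≤ Q) (hW : W.PosSemidef)
    (hP : Commute P W) (hQ : Commute Q W) : P * W ≤ Q * W := by
  classical
  rw [← sub_nonneg, ← Matrix.sub_mul]
  exact (hQ.sub_left hP).mul_nonneg (sub_nonneg.2 h) hW.nonneg

variable [DecidableEq n] {B : Matrix n n 𝕜}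

lemma iInf_eigenvalues_smul_one_le (hB : B.IsHermitian) :
    (⨅ j, hB.eigenvalues j) • (1 : Matrix n n 𝕜) ≤ B := by
  rw [← Algebra.algebraMap_eq_smul_one, algebraMap_le_iff_le_spectrum hB.isSelfAdjoint,
    hB.spectrum_real_eq_range_eigenvalues]
  rintro _ ⟨i, rfl⟩
  exact ciInf_le (Set.finite_range _).bddBelow i

lemma le_re_trace_smul_one (hB : B.PosSemidef) : B ≤ re B.trace • (1 : Matrix n n 𝕜) := by
  rw [← Algebra.algebraMap_eq_smul_one, le_algebraMap_iff_spectrum_le hB.1.isSelfAdjoint,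
    hB.1.spectrum_real_eq_range_eigenvalues, hB.1.trace_eq_sum_eigenvalues]
  rintro _ ⟨i, rfl⟩
  simpa using Finset.single_le_sum (fun j _ => hB.eigenvalues_nonneg j) (Finset.mem_univ i)

lemma commute_inv_of_posDef (hB : B.PosDef) : Commute B B⁻¹ := by
  have hdet := (isUnit_iff_isUnit_det B).1 hB.isUnit
  exact (mul_nonsing_inv B hdet).trans (nonsing_inv_mul B hdet).symm

lemma one_le_smul_inv (hB : B.PosDef) {t : ℝ} (h : B ≤ t • (1 : Matrix n n 𝕜)) : 1 ≤ t • B⁻¹ := by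
  have hmul := mul_le_mul_of_commute h hB.inv.posSemidef (commute_inv_of_posDef hB)
    ((Commute.one_left _).smul_left t)
  rwa [mul_nonsing_inv B ((isUnit_iff_isUnit_det B).1 hB.isUnit), Matrix.smul_mul,
    Matrix.one_mul] at hmul

lemma smul_inv_le_one (hB : B.PosDef) {t : ℝ} (h : t • (1 : Matrix n n 𝕜) ≤ B) : t • B⁻¹ ≤ 1 := by
  have hmul := mul_le_mul_of_commute h hB.inv.posSemidef ((Commute.one_left _).smul_left t)
    (commute_inv_of_posDef hB)
  rwa [mul_nonsing_inv B ((isUnit_iff_isUnit_det B).1 hB.isUnit), Matrix.smul_mul,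
    Matrix.one_mul] at hmul

end Loewner

section Update

variable [Fintype m] [Fintype n]

/-- The squared weighted Frobenius norm `‖Y‖²_{F(A)} = Tr(Yᴴ A Y A)`, as a real number. -/
noncomputable def weightedFrobeniusSq (A Y : Matrix n n 𝕜) : ℝ :=
  re (Yᴴ * A * Y * A).trace

lemma weightedFrobeniusSq_mul_mul_conjTranspose (A Q Y : Matrix n n 𝕜) :
    weightedFrobeniusSq A (Q * Y * Qᴴ) = re (Qᴴ * A * Q * (Y * (Qᴴ * A * Q) * Yᴴ)).trace := by
  have hcycle : (Q * Y * Qᴴ)ᴴ * A * (Q * Y * Qᴴ) * A = Q * Yᴴ * (Qᴴ * A * Q * Y * (Qᴴ * A)) := by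
    simp only [conjTranspose_mul, conjTranspose_conjTranspose, Matrix.mul_assoc]
  rw [weightedFrobeniusSq, hcycle, trace_mul_comm]
  simp only [Matrix.mul_assoc]

/-- The matrix `S (Sᴴ A S)⁻¹ Sᴴ`, which approximates `A⁻¹` using only the columns of `S`: for
invertible `Sᴴ A S` it agrees with `A⁻¹` on the range of `A S`. For singular `Sᴴ A S` it is `0`. -/
noncomputable def sketchedInv [DecidableEq m] (A : Matrix n n 𝕜) (S : Matrix n m 𝕜) :
    Matrix n n 𝕜 :=
  S * (Sᴴ * A * S)⁻¹ * Sᴴ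

variable [DecidableEq m] {A : Matrix n n 𝕜}

lemma sketchedInv_posSemidef (hA : A.PosSemidef) (S : Matrix n m 𝕜) :
    (sketchedInv A S).PosSemidef :=
  (hA.conjTranspose_mul_mul_same S).inv.mul_mul_conjTranspose_same S

lemma sketchedInv_mul_mul_self (A : Matrix n n 𝕜) (S : Matrix n m 𝕜) :
    sketchedInv A S * A * sketchedInv A S = sketchedInv A S := by
  calc sketchedInv A S * A * sketchedInv A S
      = S * ((Sᴴ * A * S)⁻¹ * (Sᴴ * A * S) * (Sᴴ * A * S)⁻¹) * Sᴴ := by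
        simp only [sketchedInv, Matrix.mul_assoc]
    _ = sketchedInv A S := by
        rcases nonsing_inv_cancel_or_zero (Sᴴ * A * S) with ⟨hinv, -⟩ | hzero
        · rw [hinv, Matrix.one_mul, sketchedInv]
        · simp only [sketchedInv, hzero, Matrix.mul_zero]

lemma sketchedInv_of_isUnit [DecidableEq n] {S : Matrix n n 𝕜} (hS : IsUnit S.det) :
    sketchedInv A S = A⁻¹ := by
  have hSH : IsUnit Sᴴ.det := by
    rw [det_conjTranspose]
    exact hS.star
  rw [sketchedInv, Matrix.mul_inv_rev, Matrix.mul_inv_rev, mul_nonsing_inv_cancel_left S _ hS,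
    nonsing_inv_mul_cancel_right Sᴴ _ hSH]

lemma mul_conjTranspose_le_smul_sketchedInv {S : Matrix n m 𝕜} (hB : (Sᴴ * A * S).PosDef) :
    S * Sᴴ ≤ re (Sᴴ * A * S).trace • sketchedInv A S := by
  have h := mul_mul_conjTranspose_mono
    (one_le_smul_inv hB (le_re_trace_smul_one hB.posSemidef)) S
  simpa only [sketchedInv, Matrix.mul_one, Matrix.mul_smul, Matrix.smul_mul] using h

lemma smul_inv_le_mul_conjTranspose [DecidableEq n] {L : Matrix n n 𝕜}
    (hL : IsUnit L.det) (hB : (Lᴴ * A * L).PosDef) :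
    (⨅ j, hB.isHermitian.eigenvalues j) • A⁻¹ ≤ L * Lᴴ := by
  have h := mul_mul_conjTranspose_mono
    (smul_inv_le_one hB (iInf_eigenvalues_smul_one_le hB.isHermitian)) L
  rw [← sketchedInv_of_isUnit hL]
  simpa only [sketchedInv, Matrix.mul_one, Matrix.mul_smul, Matrix.smul_mul] using h

variable [DecidableEq n]

/-- The block BFGS update of the approximation `X` of `A⁻¹` along the columns of `S`. -/
noncomputable def bfgsUpdate (A : Matrix n n 𝕜) (S : Matrix n m 𝕜) (X : Matrix n n 𝕜) :
    Matrix n n 𝕜 :=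
  sketchedInv A S + (1 - sketchedInv A S * A) * X * (1 - A * sketchedInv A S)

lemma bfgsUpdate_sub_inv (hA : IsUnit A.det) (S : Matrix n m 𝕜) (X : Matrix n n 𝕜) :
    bfgsUpdate A S X - A⁻¹ =
      (1 - sketchedInv A S * A) * (X - A⁻¹) * (1 - A * sketchedInv A S) := by
  have hinv : (1 - sketchedInv A S * A) * A⁻¹ * (1 - A * sketchedInv A S) =
      A⁻¹ - sketchedInv A S := by
    rw [Matrix.sub_mul, mul_nonsing_inv_cancel_right A _ hA, Matrix.one_mul, Matrix.mul_sub,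
      Matrix.mul_one, Matrix.sub_mul, nonsing_inv_mul_cancel_left A _ hA, ← Matrix.mul_assoc,
      sketchedInv_mul_mul_self, sub_self, sub_zero]
  rw [Matrix.mul_sub (1 - sketchedInv A S * A) X, Matrix.sub_mul (_ * X), hinv, bfgsUpdate]
  abel

lemma conjTranspose_one_sub_sketchedInv_mul (hA : A.PosSemidef) (S : Matrix n m 𝕜) :
    (1 - sketchedInv A S * A)ᴴ = 1 - A * sketchedInv A S := by
  rw [conjTranspose_sub, conjTranspose_one, conjTranspose_mul, hA.1.eq,
    (sketchedInv_posSemidef hA S).1.eq]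

lemma one_sub_mul_mul_one_sub_sketchedInv (A : Matrix n n 𝕜) (S : Matrix n m 𝕜) :
    (1 - A * sketchedInv A S) * A * (1 - sketchedInv A S * A) = A - A * sketchedInv A S * A := by
  calc (1 - A * sketchedInv A S) * A * (1 - sketchedInv A S * A)
      = A - A * sketchedInv A S * A - A * sketchedInv A S * A +
          A * (sketchedInv A S * A * sketchedInv A S) * A := by noncomm_ring
    _ = A - A * sketchedInv A S * A := by
        rw [sketchedInv_mul_mul_self]
        abel

lemma weightedFrobeniusSq_bfgsUpdate_sub_inv_le (hA : A.PosDef) (S : Matrix n m 𝕜)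
    (X : Matrix n n 𝕜) :
    weightedFrobeniusSq A (bfgsUpdate A S X - A⁻¹) ≤ weightedFrobeniusSq A (X - A⁻¹) -
      re (sketchedInv A S * (A * (X - A⁻¹)ᴴ * A * (X - A⁻¹) * A)).trace := by
  set P := sketchedInv A S with hP
  set Y := X - A⁻¹ with hY
  have hQ : (1 - P * A)ᴴ = 1 - A * P := conjTranspose_one_sub_sketchedInv_mul hA.posSemidef S
  have hQAQ : (1 - P * A)ᴴ * A * (1 - P * A) = A - A * P * A := by
    rw [hQ, one_sub_mul_mul_one_sub_sketchedInv]
  have hle : A - A * P * A ≤ A := by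
    have hAPA := (sketchedInv_posSemidef hA.posSemidef S).conjTranspose_mul_mul_same A
    rw [hA.1.eq] at hAPA
    exact sub_le_self A hAPA.nonneg
  have hpsd : (Y * (A - A * P * A) * Yᴴ).PosSemidef := by
    rw [← hQAQ]
    exact (hA.posSemidef.conjTranspose_mul_mul_same _).mul_mul_conjTranspose_same Y
  calc weightedFrobeniusSq A (bfgsUpdate A S X - A⁻¹)
      = re ((A - A * P * A) * (Y * (A - A * P * A) * Yᴴ)).trace := by
        rw [bfgsUpdate_sub_inv ((isUnit_iff_isUnit_det A).1 hA.isUnit), ← hP, ← hY, ← hQ,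
          weightedFrobeniusSq_mul_mul_conjTranspose, hQAQ]
    _ ≤ re (A * (Y * (A - A * P * A) * Yᴴ)).trace := re_trace_mul_mono hle hpsd
    _ = re (A * Y * (A * Yᴴ)).trace - re (A * Y * A * (P * (A * Yᴴ))).trace := by
        rw [← map_sub, ← trace_sub]
        congr 2
        noncomm_ring
    _ = weightedFrobeniusSq A Y - re (P * (A * Yᴴ * A * Y * A)).trace := by
        rw [weightedFrobeniusSq, trace_mul_comm (A * Y), trace_mul_comm (A * Y * A),
          trace_mul_comm (Yᴴ * A * Y)]
        simp only [Matrix.mul_assoc]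

theorem sum_weightedFrobeniusSq_bfgsUpdate_sub_inv_le [Fintype ι] {κ : ι → Type*}
    [∀ i, Fintype (κ i)] [∀ i, DecidableEq (κ i)] (hA : A.PosDef)
    (S : ∀ i, Matrix n (κ i) 𝕜) {p : ι → ℝ} (hp : ∀ i, 0 ≤ p i) (hp_sum : ∑ i, p i = 1)
    {ρ : ℝ} (hρ : ρ • A⁻¹ ≤ ∑ i, p i • sketchedInv A (S i)) (X : Matrix n n 𝕜) :
    ∑ i, p i * weightedFrobeniusSq A (bfgsUpdate A (S i) X - A⁻¹) ≤
      (1 - ρ) * weightedFrobeniusSq A (X - A⁻¹) := by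
  set Y := X - A⁻¹
  set W := A * Yᴴ * A * Y * A with hW
  have hW_psd : W.PosSemidef := by
    simpa only [conjTranspose_mul, hA.1.eq, hW, Matrix.mul_assoc] using
      hA.posSemidef.conjTranspose_mul_mul_same (Y * A)
  have hW_norm : re (A⁻¹ * W).trace = weightedFrobeniusSq A Y := by
    simp only [weightedFrobeniusSq, hW, Matrix.mul_assoc,
      nonsing_inv_mul_cancel_left A _ ((isUnit_iff_isUnit_det A).1 hA.isUnit)]
  have hdecrease : ρ * weightedFrobeniusSq A Y ≤ ∑ i, p i * re (sketchedInv A (S i) * W).trace := by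
    simpa only [Matrix.smul_mul, trace_smul, RCLike.smul_re, hW_norm, Finset.sum_mul, trace_sum,
      map_sum] using re_trace_mul_mono hρ hW_psd
  calc ∑ i, p i * weightedFrobeniusSq A (bfgsUpdate A (S i) X - A⁻¹)
      ≤ ∑ i, p i * (weightedFrobeniusSq A Y - re (sketchedInv A (S i) * W).trace) :=
        Finset.sum_le_sum fun i _ => mul_le_mul_of_nonneg_left
          (weightedFrobeniusSq_bfgsUpdate_sub_inv_le hA (S i) X) (hp i)
    _ = weightedFrobeniusSq A Y - ∑ i, p i * re (sketchedInv A (S i) * W).trace := by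
        simp only [mul_sub, Finset.sum_sub_distrib, ← Finset.sum_mul, hp_sum, one_mul]
    _ ≤ (1 - ρ) * weightedFrobeniusSq A Y := by linarith

end Update

section Blocks

/-- The submatrix of `L` consisting of the columns with index in `s`. -/
def colBlock (L : Matrix m n 𝕜) (s : Finset n) : Matrix m s 𝕜 :=
  Matrix.of fun x j => L x j.1

/-- The weight `Tr(Sᴴ A S) / Tr(Lᴴ A L)` of the block `S` of columns of `L` with index in `s`; over
a partition of the columns these are the probabilities of choosing the blocks. -/
noncomputable def blockWeight [Fintype m] [Fintype n] (A : Matrix m m 𝕜) (L : Matrix m n 𝕜)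
    (s : Finset n) : ℝ :=
  re ((colBlock L s)ᴴ * A * colBlock L s).trace / re (Lᴴ * A * L).trace

lemma blockWeight_nonneg [Fintype m] [Fintype n] {A : Matrix m m 𝕜} (hA : A.PosSemidef)
    (L : Matrix m n 𝕜) (s : Finset n) : 0 ≤ blockWeight A L s :=
  div_nonneg (RCLike.nonneg_iff.1 (hA.conjTranspose_mul_mul_same _).trace_nonneg).1
    (RCLike.nonneg_iff.1 (hA.conjTranspose_mul_mul_same _).trace_nonneg).1

lemma posDef_colBlock [Fintype m] {A : Matrix m m 𝕜} {L : Matrix m n 𝕜}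
    (h : (Lᴴ * A * L).PosDef) (s : Finset n) : ((colBlock L s)ᴴ * A * colBlock L s).PosDef :=
  h.submatrix (e := ((↑) : s → n)) Subtype.val_injective

variable [Fintype n] [Fintype ι] {C : ι → Finset n}

lemma sum_sum_coe_of_partition {M : Type*} [AddCommMonoid M]
    (hdis : ∀ i j, i ≠ j → Disjoint (C i) (C j)) (hcover : ∀ x, ∃ i, x ∈ C i) (f : n → M) :
    ∑ i, ∑ x : C i, f x = ∑ x, f x := by
  classical
  have huniv : Finset.univ.biUnion C = Finset.univ := by
    ext x
    simpa using hcover x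
  rw [← huniv, Finset.sum_biUnion fun i _ j _ => hdis i j]
  exact Finset.sum_congr rfl fun i _ => Finset.sum_coe_sort (C i) f

lemma sum_colBlock_mul_conjTranspose (hdis : ∀ i j, i ≠ j → Disjoint (C i) (C j))
    (hcover : ∀ x, ∃ i, x ∈ C i) (L : Matrix m n 𝕜) :
    ∑ i, colBlock L (C i) * (colBlock L (C i))ᴴ = L * Lᴴ := by
  ext a b
  rw [Matrix.sum_apply]
  exact sum_sum_coe_of_partition hdis hcover fun x => L a x * Lᴴ x b

lemma sum_blockWeight [Fintype m] (hdis : ∀ i j, i ≠ j → Disjoint (C i) (C j))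
    (hcover : ∀ x, ∃ i, x ∈ C i) {A : Matrix m m 𝕜} {L : Matrix m n 𝕜}
    (hT : re (Lᴴ * A * L).trace ≠ 0) : ∑ i, blockWeight A L (C i) = 1 := by
  simp only [blockWeight]
  rw [← Finset.sum_div, div_eq_one_iff_eq hT, Matrix.trace, map_sum]
  simp only [Matrix.trace, map_sum]
  exact sum_sum_coe_of_partition hdis hcover fun x => re ((Lᴴ * A * L) x x)

lemma smul_inv_le_sum_blockWeight_smul_sketchedInv [DecidableEq n]
    (hdis : ∀ i j, i ≠ j → Disjoint (C i) (C j)) (hcover : ∀ x, ∃ i, x ∈ C i)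
    {A L : Matrix n n 𝕜} (hL : IsUnit L.det) (hB : (Lᴴ * A * L).PosDef) :
    ((⨅ j, hB.isHermitian.eigenvalues j) / re (Lᴴ * A * L).trace) • A⁻¹ ≤
      ∑ i, blockWeight A L (C i) • sketchedInv A (colBlock L (C i)) := by
  have hT : 0 ≤ re (Lᴴ * A * L).trace := (RCLike.nonneg_iff.1 hB.posSemidef.trace_nonneg).1
  have hsum : (⨅ j, hB.isHermitian.eigenvalues j) • A⁻¹ ≤
      ∑ i, re ((colBlock L (C i))ᴴ * A * colBlock L (C i)).trace •
        sketchedInv A (colBlock L (C i)) :=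
    calc (⨅ j, hB.isHermitian.eigenvalues j) • A⁻¹ ≤ L * Lᴴ := smul_inv_le_mul_conjTranspose hL hB
      _ = ∑ i, colBlock L (C i) * (colBlock L (C i))ᴴ :=
        (sum_colBlock_mul_conjTranspose hdis hcover L).symm
      _ ≤ _ := Finset.sum_le_sum fun i _ =>
        mul_conjTranspose_le_smul_sketchedInv (posDef_colBlock hB (C i))
  simpa only [blockWeight, div_eq_inv_mul, mul_smul, Finset.smul_sum] using
    smul_le_smul_of_nonneg_left hsum (inv_nonneg.2 hT)

end Blocks

theorem stmt18_general [Fintype n] [Fintype ι] [DecidableEq n] [Nonempty n]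
    {A L : Matrix n n 𝕜} (hA : A.PosDef) (hL : IsUnit L.det) {C : ι → Finset n}
    (hdis : ∀ i j, i ≠ j → Disjoint (C i) (C j)) (hcover : ∀ x, ∃ i, x ∈ C i)
    (hH : (Lᴴ * A * L).IsHermitian) (X : Matrix n n 𝕜) :
    ∑ i, blockWeight A L (C i) * weightedFrobeniusSq A (bfgsUpdate A (colBlock L (C i)) X - A⁻¹) ≤
      (1 - (⨅ j, hH.eigenvalues j) / re (Lᴴ * A * L).trace) *
        weightedFrobeniusSq A (X - A⁻¹) := by
  have hB : (Lᴴ * A * L).PosDef :=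
    hA.conjTranspose_mul_mul_same (mulVec_injective_of_isUnit ((isUnit_iff_isUnit_det L).2 hL))
  have hT : 0 < re (Lᴴ * A * L).trace := (RCLike.pos_iff.1 hB.trace_pos).1
  exact sum_weightedFrobeniusSq_bfgsUpdate_sub_inv_le hA (fun i => colBlock L (C i))
    (fun i => blockWeight_nonneg hA.posSemidef L (C i)) (sum_blockWeight hdis hcover hT.ne')
    (smul_inv_le_sum_blockWeight_smul_sketchedInv hdis hcover hL hB) X

end

theorem stmt18 {n r : ℕ} (hn : 0 < n) (A L : Matrix (Fin n) (Fin n) ℝ)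
    (hA : A.PosDef) (hL : IsUnit L.det)
    (C : Fin r → Finset (Fin n))
    (hne : ∀ i, (C i).Nonempty)
    (hdis : ∀ i j, i ≠ j → Disjoint (C i) (C j))
    (hcover : ∀ x : Fin n, ∃ i, x ∈ C i)
    (hH : (Lᵀ * A * L).IsHermitian) :
    let X := L * Lᵀ
    -- `S_i` is the column submatrix of `L` with columns indexed by `C i`
    let Ssub : (i : Fin r) → Matrix (Fin n) (C i) ℝ :=
      fun i => Matrix.of fun x j => L x j.1
    let P : (i : Fin r) → Matrix (Fin n) (Fin n) ℝ :=
      fun i => Ssub i * ((Ssub i)ᵀ * A * Ssub i)⁻¹ * (Ssub i)ᵀ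
    let Xp : (i : Fin r) → Matrix (Fin n) (Fin n) ℝ :=
      fun i => P i + (1 - P i * A) * X * (1 - A * P i)
    let p : Fin r → ℝ := fun i => ((Ssub i)ᵀ * A * Ssub i).trace / (Lᵀ * A * L).trace
    ∑ i, p i * ((Xp i - A⁻¹)ᵀ * A * (Xp i - A⁻¹) * A).trace ≤
      (1 - (⨅ j, hH.eigenvalues j) / (Lᵀ * A * L).trace) *
        ((X - A⁻¹)ᵀ * A * (X - A⁻¹) * A).trace := by
  have : Nonempty (Fin n) := ⟨⟨0, hn⟩⟩
  exact stmt18_general hA hL hdis hcover hH (L * Lᵀ)
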